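/- Assume the standing assumptions and let β ∈ ℝ. The convex cone E(A,β) of almost β-harmonic vectors, partially ordered by ξ ≥ μ ⇔ ξ − μ ∈ E(A,β), is a lattice cone: every pair ξ, η ∈ E(A,β) has a least upper bound ξ ∨ η ∈ E(A,β) and a greatest lower bound ξ ∧ η ∈ E(A,β) for this order. -/

import Mathlib

open scoped ENNReal
open Filter

variable {V : Type*}

/-- The set of vertices of the graph of `A` that emit no edges or infinitely many edges. -/
def VInf (A : V → V → ℝ≥0∞) : Set V :=
  {v | {w | A v w ≠ 0} = ∅ ∨ {w | A v w ≠ 0}.Infinite}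

/-- A set of vertices is hereditary if every edge with source in it has range in it. -/
def Hereditary (A : V → V → ℝ≥0∞) (H : Set V) : Prop :=
  ∀ ⦃v w : V⦄, v ∈ H → A v w ≠ 0 → w ∈ H

/-- A set of vertices is saturated if it contains every finite emitter all of whose
out-neighbours lie in it. -/
def Saturated (A : V → V → ℝ≥0∞) (H : Set V) : Prop :=
  ∀ v : V, v ∉ VInf A → (∀ w, A v w ≠ 0 → w ∈ H) → v ∈ H

/-- `A` is cofinal if the only hereditary and saturated subsets are `∅` and `V`. -/
def Cofinal (A : V → V → ℝ≥0∞) : Prop :=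
  ∀ H : Set V, Hereditary A H → Saturated A H → H = ∅ ∨ H = Set.univ

/-- Matrix powers of `A`, with entries in `[0,∞]`. -/
noncomputable def Apow [DecidableEq V] (A : V → V → ℝ≥0∞) : ℕ → V → V → ℝ≥0∞
  | 0 => fun v w => if v = w then 1 else 0
  | n + 1 => fun v w => ∑' u, A v u * Apow A n u w

/-- `e^β` as an extended nonnegative real. -/
noncomputable def expb (β : ℝ) : ℝ≥0∞ := ENNReal.ofReal (Real.exp β)

/-- `e^{-nβ}` as an extended nonnegative real. -/
noncomputable def expn (β : ℝ) (n : ℕ) : ℝ≥0∞ := ENNReal.ofReal (Real.exp (-(n : ℝ) * β))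

/-- A vector `ξ : V → [0,∞)` is almost `β`-harmonic for `A` if
`∑_w A_{vw} ξ_w = e^β ξ_v` off `V_∞` and `∑_w A_{vw} ξ_w ≤ e^β ξ_v` on `V_∞`. -/
def IsAlmostHarmonic (A : V → V → ℝ≥0∞) (β : ℝ) (ξ : V → ℝ≥0∞) : Prop :=
  (∀ v, ξ v ≠ ⊤) ∧
  (∀ v, v ∉ VInf A → ∑' w, A v w * ξ w = expb β * ξ v) ∧
  (∀ v, v ∈ VInf A → ∑' w, A v w * ξ w ≤ expb β * ξ v)

/-- A vector `ξ : V → [0,∞)` is `β`-harmonic for `A` if `∑_w A_{vw} ξ_w = e^β ξ_v`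
for every vertex `v`. -/
def IsHarmonic (A : V → V → ℝ≥0∞) (β : ℝ) (ξ : V → ℝ≥0∞) : Prop :=
  (∀ v, ξ v ≠ ⊤) ∧ ∀ v, ∑' w, A v w * ξ w = expb β * ξ v

/-- The non-wandering vertices: those admitting a loop of positive length. -/
def NW (A : V → V → ℝ≥0∞) : Set V :=
  {v | Relation.TransGen (fun a b => A a b ≠ 0) v v}

/-- Standing assumptions i)–iii): `A` is cofinal, the graph has no sinks, the entries of
`A` are finite and all powers of `A` have finite entries. -/
def Standing [DecidableEq V] (A : V → V → ℝ≥0∞) : Prop :=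
  Cofinal A ∧ (∀ v, ∃ w, A v w ≠ 0) ∧ (∀ v w, A v w ≠ ⊤) ∧
    ∀ (n : ℕ) (v w : V), Apow A n v w ≠ ⊤

/-- A function `k` supported on `V_∞` is `β`-summable when
`∑_{u ∈ V_∞} ∑_n e^{-nβ} A^n_{uu} k_u < ∞`. -/
def BSummable [DecidableEq V] (A : V → V → ℝ≥0∞) (β : ℝ) (k : V → ℝ≥0∞) : Prop :=
  (∀ u, u ∉ VInf A → k u = 0) ∧ (∑' u, ∑' n, expn β n * Apow A n u u * k u) ≠ ⊤

/-- `k̂_v = ∑_{u ∈ V_∞} ∑_n e^{-nβ} A^n_{vu} k_u` (for `k` supported on `V_∞`). -/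
noncomputable def khat [DecidableEq V] (A : V → V → ℝ≥0∞) (β : ℝ) (k : V → ℝ≥0∞) (v : V) :
    ℝ≥0∞ :=
  ∑' u, ∑' n, expn β n * Apow A n v u * k u

/-- The first-return quantities `r_{vw}(n)`: `r_{vw}(0) = 0`, `r_{vw}(1) = A_{vw}` and
`r_{vw}(n+1) = ∑_{u ≠ w} A_{vu} r_{uw}(n)` for `n ≥ 1`. -/
noncomputable def fr [DecidableEq V] (A : V → V → ℝ≥0∞) (w : V) : ℕ → V → ℝ≥0∞
  | 0 => fun _ => 0
  | 1 => fun v => A v w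
  | n + 2 => fun v => ∑' u, if u = w then 0 else A v u * fr A w (n + 1) u

/-- The order on the cone `E(A,β)` of almost `β`-harmonic vectors:
`μ ≤ ξ` iff `ξ - μ ∈ E(A,β)`, i.e. `ξ = μ + δ` for some `δ ∈ E(A,β)`. -/
def Below (A : V → V → ℝ≥0∞) (β : ℝ) (μ ξ : V → ℝ≥0∞) : Prop :=
  ∃ δ : V → ℝ≥0∞, IsAlmostHarmonic A β δ ∧ ∀ v, ξ v = μ v + δ v

/-- The matrix operator `e^{-β} A` acting on vectors. -/
noncomputable def scaledOp (A : V → V → ℝ≥0∞) (β : ℝ) (ξ : V → ℝ≥0∞) (v : V) : ℝ≥0∞ :=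
  (expb β)⁻¹ * ∑' w, A v w * ξ w

lemma expb_ne_zero (β : ℝ) : expb β ≠ 0 := by
  simp [expb, Real.exp_pos]

lemma expb_ne_top (β : ℝ) : expb β ≠ ⊤ := ENNReal.ofReal_ne_top

lemma scaledOp_mono (A : V → V → ℝ≥0∞) (β : ℝ) {ξ η : V → ℝ≥0∞} (h : ∀ v, ξ v ≤ η v) (v : V) :
    scaledOp A β ξ v ≤ scaledOp A β η v := by
  unfold scaledOp
  gcongr with w
  exact h w

lemma scaledOp_add (A : V → V → ℝ≥0∞) (β : ℝ) (ξ η : V → ℝ≥0∞) (v : V) :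
    scaledOp A β (fun w => ξ w + η w) v = scaledOp A β ξ v + scaledOp A β η v := by
  simp only [scaledOp, mul_add, ENNReal.tsum_add]

lemma scaledOp_add_congr (A : V → V → ℝ≥0∞) (β : ℝ) {ξ a η b : V → ℝ≥0∞}
    (h : ∀ v, ξ v + a v = η v + b v) (v : V) :
    scaledOp A β ξ v + scaledOp A β a v = scaledOp A β η v + scaledOp A β b v := by
  rw [← scaledOp_add, ← scaledOp_add, funext h]

/-- Almost harmonic vectors are the finite solutions of `ξ = e^{-β} A ξ + k` with `k`
supported on `V_∞`. -/
lemma isAlmostHarmonic_iff (A : V → V → ℝ≥0∞) (β : ℝ) (ξ : V → ℝ≥0∞) :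
    IsAlmostHarmonic A β ξ ↔ (∀ v, ξ v ≠ ⊤) ∧ ∃ k : V → ℝ≥0∞, (∀ v, v ∉ VInf A → k v = 0) ∧
      ∀ v, ξ v = scaledOp A β ξ v + k v := by
  have h0 := expb_ne_zero β
  have h1 := expb_ne_top β
  have hmul : ∀ v, expb β * scaledOp A β ξ v = ∑' w, A v w * ξ w := fun v => by
    rw [scaledOp, ← mul_assoc, ENNReal.mul_inv_cancel h0 h1, one_mul]
  constructor
  · rintro ⟨hf, he, hl⟩
    have hle : ∀ v, scaledOp A β ξ v ≤ ξ v := fun v => by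
      rw [← ENNReal.mul_le_mul_iff_right h0 h1, hmul]
      by_cases hv : v ∈ VInf A
      · exact hl v hv
      · exact (he v hv).le
    refine ⟨hf, fun v => ξ v - scaledOp A β ξ v, fun v hv => ?_, fun v => ?_⟩
    · refine tsub_eq_zero_of_le ?_
      rw [← ENNReal.mul_le_mul_iff_right h0 h1, hmul]
      exact (he v hv).ge
    · exact (add_tsub_cancel_of_le (hle v)).symm
  · rintro ⟨hf, k, hk, hξ⟩
    refine ⟨hf, fun v hv => ?_, fun v _ => ?_⟩
    · rw [← hmul]
      conv_rhs => rw [hξ v, hk v hv, add_zero]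
    · rw [← hmul]
      gcongr
      rw [hξ v]
      exact le_self_add

lemma IsAlmostHarmonic.add {A : V → V → ℝ≥0∞} {β : ℝ} {ξ η : V → ℝ≥0∞}
    (hξ : IsAlmostHarmonic A β ξ) (hη : IsAlmostHarmonic A β η) :
    IsAlmostHarmonic A β (fun v => ξ v + η v) := by
  rw [isAlmostHarmonic_iff] at *
  obtain ⟨hξf, k, hk, hξ⟩ := hξ
  obtain ⟨hηf, l, hl, hη⟩ := hη
  refine ⟨fun v => ENNReal.add_ne_top.2 ⟨hξf v, hηf v⟩, fun v => k v + l v,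
    fun v hv => by simp [hk v hv, hl v hv], fun v => ?_⟩
  rw [scaledOp_add]
  conv_lhs => rw [hξ v, hη v]
  ring

/-- The pointwise least vector `a` with `e^{-β} A a + g ≤ a` and `f ≤ a`. -/
noncomputable def leastSol (A : V → V → ℝ≥0∞) (β : ℝ) (f g : V → ℝ≥0∞) (v : V) : ℝ≥0∞ :=
  ⨅ a : {a : V → ℝ≥0∞ // ∀ v, scaledOp A β a v + g v ≤ a v ∧ f v ≤ a v}, a.1 v

lemma leastSol_le {A : V → V → ℝ≥0∞} {β : ℝ} {f g a : V → ℝ≥0∞}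
    (h : ∀ v, scaledOp A β a v + g v ≤ a v ∧ f v ≤ a v) (v : V) : leastSol A β f g v ≤ a v :=
  iInf_le (fun a : {a : V → ℝ≥0∞ // ∀ v, scaledOp A β a v + g v ≤ a v ∧ f v ≤ a v} => a.1 v)
    ⟨a, h⟩

lemma leastSol_eq (A : V → V → ℝ≥0∞) (β : ℝ) (f g : V → ℝ≥0∞) (v : V) :
    leastSol A β f g v = max (f v) (scaledOp A β (leastSol A β f g) v + g v) := by
  have hle : ∀ v, max (f v) (scaledOp A β (leastSol A β f g) v + g v) ≤ leastSol A β f g v :=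
    fun v => le_iInf fun a => max_le (a.2 v).2
      ((add_le_add_left (scaledOp_mono A β (leastSol_le a.2) v) _).trans (a.2 v).1)
  refine le_antisymm ?_ (hle v)
  exact leastSol_le (a := fun v => max (f v) (scaledOp A β (leastSol A β f g) v + g v))
    (fun v => ⟨(add_le_add_left (scaledOp_mono A β hle v) _).trans (le_max_right _ _),
      le_max_left _ _⟩) v

/-- Every two almost harmonic vectors have a least upper bound. -/
lemma exists_sup (A : V → V → ℝ≥0∞) (β : ℝ) {ξ η : V → ℝ≥0∞}
    (hξ : IsAlmostHarmonic A β ξ) (hη : IsAlmostHarmonic A β η) :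
    ∃ σ : V → ℝ≥0∞, IsAlmostHarmonic A β σ ∧ Below A β ξ σ ∧ Below A β η σ ∧
      ∀ τ : V → ℝ≥0∞, IsAlmostHarmonic A β τ → Below A β ξ τ → Below A β η τ →
        Below A β σ τ := by
  have hξ' := hξ
  rw [isAlmostHarmonic_iff] at hξ hη
  obtain ⟨hξf, k, hk, hξ⟩ := hξ
  obtain ⟨hηf, l, hl, hη⟩ := hη
  set P := scaledOp A β with hP
  set g : V → ℝ≥0∞ := fun v => l v - k v with hg
  set f : V → ℝ≥0∞ := fun v => η v - ξ v with hf
  set a := leastSol A β f g with ha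
  have hmax : ∀ v, a v = max (f v) (P a v + g v) := leastSol_eq A β f g
  have hag : ∀ v, P a v + g v ≤ a v := fun v => (le_max_right _ _).trans (hmax v).ge
  have haf : ∀ v, η v ≤ ξ v + a v := fun v =>
    tsub_le_iff_left.1 ((le_max_left _ _).trans (hmax v).ge)
  have haη : ∀ v, a v ≤ η v := leastSol_le fun v => ⟨by
    conv_rhs => rw [hη v]
    exact add_le_add_right tsub_le_self _, tsub_le_self⟩
  have haT : ∀ v, a v ≠ ⊤ := fun v => ne_top_of_le_ne_top (hηf v) (haη v)
  have hPξT : ∀ v, P ξ v ≠ ⊤ := fun v =>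
    ne_top_of_le_ne_top (hξf v) (le_self_add.trans (hξ v).ge)
  have hPηT : ∀ v, P η v ≠ ⊤ := fun v =>
    ne_top_of_le_ne_top (hηf v) (le_self_add.trans (hη v).ge)
  have hPaT : ∀ v, P a v ≠ ⊤ := fun v =>
    ne_top_of_le_ne_top (haT v) (le_self_add.trans (hag v))
  have hkT : ∀ v, k v ≠ ⊤ := fun v =>
    ne_top_of_le_ne_top (hξf v) (le_add_self.trans (hξ v).ge)
  have hlT : ∀ v, l v ≠ ⊤ := fun v =>
    ne_top_of_le_ne_top (hηf v) (le_add_self.trans (hη v).ge)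
  have hgT : ∀ v, g v ≠ ⊤ := fun v => ne_top_of_le_ne_top (hlT v) tsub_le_self
  set b : V → ℝ≥0∞ := fun v => ξ v + a v - η v with hb
  have hab : ∀ v, ξ v + a v = η v + b v := fun v => (add_tsub_cancel_of_le (haf v)).symm
  have hPab : ∀ v, P ξ v + P a v = P η v + P b v := scaledOp_add_congr A β hab
  have hkg : ∀ v, k v + g v = l v + (k v - l v) := fun v => by
    rw [hg]
    simp only [add_tsub_eq_max, max_comm]
  have hPb : ∀ v, P b v ≤ b v := fun v => by
    have h : P η v + l v + P b v ≤ P η v + l v + b v := calc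
      P η v + l v + P b v ≤ (P η v + P b v) + (l v + (k v - l v)) := by
        rw [add_right_comm]
        exact add_le_add_right le_self_add _
      _ = (P ξ v + k v) + (P a v + g v) := by rw [← hPab, ← hkg]; ring
      _ ≤ ξ v + a v := by rw [← hξ]; exact add_le_add_right (hag v) _
      _ = P η v + l v + b v := by rw [← hη, hab]
    exact (ENNReal.add_le_add_iff_left (ENNReal.add_ne_top.2 ⟨hPηT v, hlT v⟩)).1 h
  have haeq : ∀ v, a v = P a v + g v := fun v => by
    refine le_antisymm ?_ (hag v)
    rcases le_total (f v) (P a v + g v) with h | h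
    · exact (hmax v).le.trans (max_le h le_rfl)
    have haf' : a v = η v - ξ v := (hmax v).trans (max_eq_left h)
    rcases le_total (η v) (ξ v) with h' | h'
    · rw [haf', tsub_eq_zero_of_le h']
      exact zero_le
    have hsum : ξ v + a v = η v := by rw [haf', add_tsub_cancel_of_le h']
    have hb0 : b v = 0 := by simp [hb, hsum]
    have hPb0 : P b v = 0 := le_antisymm (hb0 ▸ hPb v) zero_le
    have hP0 := hPab v
    rw [hPb0, add_zero] at hP0
    have h2 : P ξ v + k v + a v ≤ P ξ v + k v + (P a v + g v) := calc
      P ξ v + k v + a v = P ξ v + P a v + l v := by rw [← hξ, hsum, hP0, ← hη]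
      _ ≤ P ξ v + P a v + (l v + (k v - l v)) := add_le_add_right le_self_add _
      _ = P ξ v + k v + (P a v + g v) := by rw [← hkg]; ring
    exact (ENNReal.add_le_add_iff_left (ENNReal.add_ne_top.2 ⟨hPξT v, hkT v⟩)).1 h2
  have hbeq : ∀ v, b v = P b v + (k v - l v) := fun v => by
    have h : P η v + l v + b v = P η v + l v + (P b v + (k v - l v)) := calc
      P η v + l v + b v = (P ξ v + P a v) + (k v + g v) := by
        rw [← hη, ← hab]
        conv_lhs => rw [hξ v, haeq v]
        ring
      _ = _ := by rw [hPab, hkg]; ring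
    exact (ENNReal.add_right_inj (ENNReal.add_ne_top.2 ⟨hPηT v, hlT v⟩)).1 h
  have haE : IsAlmostHarmonic A β a := (isAlmostHarmonic_iff A β a).2
    ⟨haT, g, fun v hv => by simp [hg, hl v hv], haeq⟩
  have hbE : IsAlmostHarmonic A β b := (isAlmostHarmonic_iff A β b).2
    ⟨fun v => ne_top_of_le_ne_top (ENNReal.add_ne_top.2 ⟨hξf v, haT v⟩) tsub_le_self,
      fun v => k v - l v, fun v hv => by simp [hk v hv], hbeq⟩
  refine ⟨fun v => ξ v + a v, hξ'.add haE, ⟨a, haE, fun v => rfl⟩, ⟨b, hbE, hab⟩, ?_⟩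
  rintro τ - ⟨a', ha'E, ha'⟩ ⟨b', hb'E, hb'⟩
  obtain ⟨ha'T, m, hm, ha'eq⟩ := (isAlmostHarmonic_iff A β a').1 ha'E
  obtain ⟨hb'T, n, hn, hb'eq⟩ := (isAlmostHarmonic_iff A β b').1 hb'E
  have hab' : ∀ v, ξ v + a' v = η v + b' v := fun v => (ha' v).symm.trans (hb' v)
  have hPa'T : ∀ v, P a' v ≠ ⊤ := fun v =>
    ne_top_of_le_ne_top (ha'T v) (le_self_add.trans (ha'eq v).ge)
  have hgm : ∀ v, g v ≤ m v := fun v => by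
    have h : P ξ v + P a' v + (k v + m v) = P ξ v + P a' v + (l v + n v) := calc
      P ξ v + P a' v + (k v + m v) = (P ξ v + k v) + (P a' v + m v) := by ring
      _ = (P η v + l v) + (P b' v + n v) := by rw [← hξ, ← ha'eq, hab', ← hη, ← hb'eq]
      _ = (P η v + P b' v) + (l v + n v) := by ring
      _ = _ := by rw [← scaledOp_add_congr A β hab' v]
    have h' := (ENNReal.add_right_inj (ENNReal.add_ne_top.2 ⟨hPξT v, hPa'T v⟩)).1 h
    exact tsub_le_iff_left.2 (le_self_add.trans h'.ge)
  have haa' : ∀ v, a v ≤ a' v := leastSol_le fun v => ⟨by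
    conv_rhs => rw [ha'eq v]
    exact add_le_add_right (hgm v) _, tsub_le_iff_left.2 (le_self_add.trans (hab' v).ge)⟩
  set d : V → ℝ≥0∞ := fun v => a' v - a v with hd
  have had : ∀ v, a' v = a v + d v := fun v => (add_tsub_cancel_of_le (haa' v)).symm
  have hPad : ∀ v, P a' v = P a v + P d v := fun v => by
    rw [hP, ← scaledOp_add, ← funext had]
  refine ⟨d, (isAlmostHarmonic_iff A β d).2
    ⟨fun v => ne_top_of_le_ne_top (ha'T v) tsub_le_self, fun v => m v - g v,
      fun v hv => by simp [hm v hv], fun v => ?_⟩, fun v => by rw [ha', had, add_assoc]⟩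
  have h : P a v + g v + d v = P a v + g v + (P d v + (m v - g v)) := calc
    P a v + g v + d v = P a v + P d v + (g v + (m v - g v)) := by
      rw [← haeq, ← had, add_tsub_cancel_of_le (hgm v), ← hPad, ← ha'eq]
    _ = _ := by ring
  exact (ENNReal.add_right_inj (ENNReal.add_ne_top.2 ⟨hPaT v, hgT v⟩)).1 h

/-- Under the standing assumptions, the cone `E(A,β)` of almost
`β`-harmonic vectors, with the order `ξ ≥ μ ⇔ ξ - μ ∈ E(A,β)`, is a lattice cone: every
pair of elements has a least upper bound and a greatest lower bound in `E(A,β)`. -/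
theorem stmt18 [Countable V] [DecidableEq V] (A : V → V → ℝ≥0∞)
    (hst : Standing A) (β : ℝ) :
    ∀ ξ η : V → ℝ≥0∞, IsAlmostHarmonic A β ξ → IsAlmostHarmonic A β η →
      (∃ σ : V → ℝ≥0∞, IsAlmostHarmonic A β σ ∧ Below A β ξ σ ∧ Below A β η σ ∧
        ∀ τ : V → ℝ≥0∞, IsAlmostHarmonic A β τ → Below A β ξ τ → Below A β η τ →
          Below A β σ τ) ∧
      (∃ ι : V → ℝ≥0∞, IsAlmostHarmonic A β ι ∧ Below A β ι ξ ∧ Below A β ι η ∧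
        ∀ τ : V → ℝ≥0∞, IsAlmostHarmonic A β τ → Below A β τ ξ → Below A β τ η →
          Below A β τ ι) := by
  intro ξ η hξ hη
  obtain ⟨σ, hσ, ⟨a, haE, ha⟩, ⟨b, hbE, hb⟩, hleast⟩ := exists_sup A β hξ hη
  refine ⟨⟨σ, hσ, ⟨a, haE, ha⟩, ⟨b, hbE, hb⟩, hleast⟩, ?_⟩
  obtain ⟨ι, hιE, hι⟩ := hleast _ (hξ.add hη) ⟨η, hη, fun v => rfl⟩
    ⟨ξ, hξ, fun v => add_comm _ _⟩
  beta_reduce at hι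
  refine ⟨ι, hιE, ⟨b, hbE, fun v => ?_⟩, ⟨a, haE, fun v => ?_⟩, ?_⟩
  · have h : η v + ξ v = η v + (ι v + b v) := by
      rw [add_comm, hι v, hb v]
      ring
    exact (ENNReal.add_right_inj (hη.1 v)).1 h
  · have h : ξ v + η v = ξ v + (ι v + a v) := by
      rw [hι v, ha v]
      ring
    exact (ENNReal.add_right_inj (hξ.1 v)).1 h
  · rintro τ hτ ⟨p, hpE, hp⟩ ⟨q, hqE, hq⟩
    obtain ⟨d, hdE, hd⟩ := hleast (fun v => τ v + p v + q v) ((hτ.add hpE).add hqE)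
      ⟨q, hqE, fun v => by rw [hp v]⟩ ⟨p, hpE, fun v => by rw [hq v]; ring⟩
    beta_reduce at hd
    refine ⟨d, hdE, fun v => ?_⟩
    have h : σ v + ι v = σ v + (τ v + d v) := calc
      σ v + ι v = τ v + (τ v + p v + q v) := by rw [← hι v, hp v, hq v]; ring
      _ = _ := by rw [hd v]; ring
    exact (ENNReal.add_right_inj (hσ.1 v)).1 h
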